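/- arXiv:1705.10636 — 2 statements merged into one kernel-verified Lean document; each statement's English description precedes it below -/
import Mathlib

section
/- Let γ ≠ 0, c := (1−γ²)²(1+γ⁻²)/4, H(x,y) := (γ+γ⁻¹)(y−γx)(γy−x) + c, P(a,b,c',d) := (γd−a)(c'−γb) + (d−γc')(γa−b) + c. Let u : ℤ → ℝ → ℝ satisfy u' = H(u₋₁,u)H(u,u₁)(u₂−u₋₂)/(P(u₋₂,u₋₁,u,u₁)P(u₋₁,u,u₁,u₂)) at every site, with P nonvanishing along the solution. Define w(n,t) := H(u(n),u(n+1))/P(u(n−1),u(n),u(n+1),u(n+2)) − 1. Then w satisfies w' = (w+1)( w₂(1/w₁+1)w − w(1/w₋₁+1)w₋₂ + w₁ − w₋₁ ). -/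
/-- The three-point second difference `a - K b + e`. -/
noncomputable def secondDiff (K a b e : ℝ) : ℝ := a - K * b + e

/-- The symmetric biquadratic with `K = γ + γ⁻¹` left as a free parameter. -/
noncomputable def edgePoly (g K c x y : ℝ) : ℝ :=
  g * (K * (x ^ 2 + y ^ 2) - K ^ 2 * (x * y)) + c

/-- The four-point polynomial, written as the edge polynomial of the middle pair plus a product of
second differences. -/
noncomputable def quadPoly (g K c a b e d : ℝ) : ℝ :=
  edgePoly g K c b e + g * secondDiff K a b e * secondDiff K b e d

/-- The derivative of `edgePoly` in its second argument. -/
noncomputable def edgePolyDeriv (g K x y : ℝ) : ℝ := g * (2 * K * y - K ^ 2 * x)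

theorem edgePoly_comm (g K c x y : ℝ) : edgePoly g K c x y = edgePoly g K c y x := by
  unfold edgePoly; ring

theorem secondDiff_comm (K a b e : ℝ) : secondDiff K a b e = secondDiff K e b a := by
  unfold secondDiff; ring

theorem quadPoly_reverse (g K c a b e d : ℝ) :
    quadPoly g K c a b e d = quadPoly g K c d e b a := by
  unfold quadPoly edgePoly secondDiff; ring

theorem secondDiff_mul_quadPoly_sub (g K c b e d p q : ℝ) :
    secondDiff K d p q * quadPoly g K c b e d p - edgePoly g K c d p * (q - b) =
      quadPoly g K c e d p q * (b + d - K * p) := by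
  unfold quadPoly edgePoly secondDiff; ring

theorem quadPoly_mul_edgePoly (g K c a b e d p : ℝ) :
    (edgePolyDeriv g K b e * quadPoly g K c a b e d - edgePoly g K c b e *
        (edgePolyDeriv g K b e + g * secondDiff K b e d - g * K * secondDiff K a b e)) * (p - a)
      + quadPoly g K c a b e d *
        (g * secondDiff K a b e * (b + d - K * p) - quadPoly g K c a b e d) =
      -(quadPoly g K c b e d p * edgePoly g K c a b) := by
  unfold quadPoly edgePolyDeriv edgePoly secondDiff; ring

/-- The contribution of the two right-hand sites to the derivative of `edgePoly / quadPoly`. -/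
theorem right_contribution (g K c a b e d p q : ℝ)
    (h0 : quadPoly g K c a b e d ≠ 0) (h1 : quadPoly g K c b e d p ≠ 0)
    (h2 : quadPoly g K c e d p q ≠ 0) :
    ((edgePolyDeriv g K b e * quadPoly g K c a b e d - edgePoly g K c b e *
        (edgePolyDeriv g K b e + g * secondDiff K b e d - g * K * secondDiff K a b e)) *
        (edgePoly g K c b e * edgePoly g K c e d * (p - a) /
          (quadPoly g K c a b e d * quadPoly g K c b e d p))
      - edgePoly g K c b e * (g * secondDiff K a b e) *
        (edgePoly g K c e d * edgePoly g K c d p * (q - b) /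
          (quadPoly g K c b e d p * quadPoly g K c e d p q))) / quadPoly g K c a b e d ^ 2 =
    edgePoly g K c b e / quadPoly g K c a b e d *
      (-g * secondDiff K a b e * secondDiff K d p q * edgePoly g K c e d /
          (quadPoly g K c a b e d * quadPoly g K c e d p q)
        + edgePoly g K c e d / quadPoly g K c b e d p
        - edgePoly g K c e d * edgePoly g K c a b / quadPoly g K c a b e d ^ 2) := by
  have hA := secondDiff_mul_quadPoly_sub g K c b e d p q
  have hB := quadPoly_mul_edgePoly g K c a b e d p
  generalize quadPoly g K c a b e d = P0 at *
  generalize quadPoly g K c b e d p = P1 at *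
  generalize quadPoly g K c e d p q = P2 at *
  generalize edgePoly g K c b e = H0 at *
  generalize edgePoly g K c e d = H1 at *
  generalize edgePoly g K c d p = H2 at *
  generalize edgePoly g K c a b = Hm at *
  generalize secondDiff K a b e = D0 at *
  generalize secondDiff K d p q = D3 at *
  generalize edgePolyDeriv g K b e * P0 - H0 *
    (edgePolyDeriv g K b e + g * secondDiff K b e d - g * K * D0) = T at *
  field_simp
  linear_combination H0 * H1 * (P0 * g * D0 * hA + P2 * hB)

theorem hasDerivAt_edgePoly_div_quadPoly (g K c : ℝ) {a b e d : ℝ → ℝ} {a' b' e' d' t : ℝ}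
    (ha : HasDerivAt a a' t) (hb : HasDerivAt b b' t) (he : HasDerivAt e e' t)
    (hd : HasDerivAt d d' t) (h0 : quadPoly g K c (a t) (b t) (e t) (d t) ≠ 0) :
    HasDerivAt
      (fun s => edgePoly g K c (b s) (e s) / quadPoly g K c (a s) (b s) (e s) (d s) - 1)
      (((edgePolyDeriv g K (e t) (b t) * b' + edgePolyDeriv g K (b t) (e t) * e') *
          quadPoly g K c (a t) (b t) (e t) (d t)
        - edgePoly g K c (b t) (e t) *
          (g * secondDiff K (b t) (e t) (d t) * a'
            + (edgePolyDeriv g K (e t) (b t) + g * secondDiff K (a t) (b t) (e t)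
              - g * K * secondDiff K (b t) (e t) (d t)) * b'
            + (edgePolyDeriv g K (b t) (e t) + g * secondDiff K (b t) (e t) (d t)
              - g * K * secondDiff K (a t) (b t) (e t)) * e'
            + g * secondDiff K (a t) (b t) (e t) * d'))
        / quadPoly g K c (a t) (b t) (e t) (d t) ^ 2) t := by
  have hE : HasDerivAt (fun s => edgePoly g K c (b s) (e s))
      (edgePolyDeriv g K (e t) (b t) * b' + edgePolyDeriv g K (b t) (e t) * e') t := by
    unfold edgePoly
    refine ((((((hb.fun_pow 2).fun_add (he.fun_pow 2)).const_mul K).fun_sub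
      ((hb.fun_mul he).const_mul (K ^ 2))).const_mul g).add_const c).congr_deriv ?_
    unfold edgePolyDeriv
    push_cast
    ring
  have hD {x y z : ℝ → ℝ} {x' y' z' : ℝ} (hx : HasDerivAt x x' t) (hy : HasDerivAt y y' t)
      (hz : HasDerivAt z z' t) :
      HasDerivAt (fun s => secondDiff K (x s) (y s) (z s)) (x' - K * y' + z') t :=
    (hx.fun_sub (hy.const_mul K)).fun_add hz
  have hQ := hE.fun_add (((hD ha hb he).const_mul g).fun_mul (hD hb he hd))
  refine ((hE.fun_div hQ h0).sub_const 1).congr_deriv ?_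
  unfold quadPoly
  ring

/-- The fraction `w₂ (1 / w₁ + 1) w₀` of consecutive values of `w = edgePoly / quadPoly - 1`. -/
theorem product_substitution (g K c a b e d p q : ℝ) (hg : g ≠ 0)
    (h0 : quadPoly g K c a b e d ≠ 0) (h1 : quadPoly g K c b e d p ≠ 0)
    (h2 : quadPoly g K c e d p q ≠ 0)
    (hw : edgePoly g K c e d / quadPoly g K c b e d p - 1 ≠ 0) :
    (edgePoly g K c d p / quadPoly g K c e d p q - 1) *
        (1 / (edgePoly g K c e d / quadPoly g K c b e d p - 1) + 1) *
        (edgePoly g K c b e / quadPoly g K c a b e d - 1) =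
      -g * secondDiff K a b e * secondDiff K d p q * edgePoly g K c e d /
        (quadPoly g K c a b e d * quadPoly g K c e d p q) := by
  have key (a b e d : ℝ) (h : quadPoly g K c a b e d ≠ 0) :
      edgePoly g K c b e / quadPoly g K c a b e d - 1 =
        -(g * secondDiff K a b e * secondDiff K b e d) / quadPoly g K c a b e d := by
    rw [div_sub_one h, quadPoly]
    ring
  have hD : edgePoly g K c e d =
      quadPoly g K c b e d p - g * secondDiff K b e d * secondDiff K e d p := by
    rw [quadPoly]
    ring
  rw [key b e d p h1] at hw
  rw [key a b e d h0, key b e d p h1, key e d p q h2, hD]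
  have hb : secondDiff K b e d ≠ 0 := by
    rintro h
    simp [h] at hw
  have he : secondDiff K e d p ≠ 0 := by
    rintro h
    simp [h] at hw
  field_simp
  ring

/-- The substitution w = H/P − 1 maps solutions of the trigonometric case
(Qut-trig) of the lattice equation (HPut) to solutions of the universal
equation (wt). -/
theorem stmt14 (γ : ℝ) (hγ : γ ≠ 0)
    (c : ℝ) (hc : c = (1 - γ ^ 2) ^ 2 * (1 + γ⁻¹ ^ 2) / 4)
    (H : ℝ → ℝ → ℝ) (P : ℝ → ℝ → ℝ → ℝ → ℝ)
    (hH : ∀ x y, H x y = (γ + γ⁻¹) * (y - γ * x) * (γ * y - x) + c)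
    (hP : ∀ a b c' d, P a b c' d =
      (γ * d - a) * (c' - γ * b) + (d - γ * c') * (γ * a - b) + c)
    (u : ℤ → ℝ → ℝ)
    (hPne : ∀ (n : ℤ) (t : ℝ),
      P (u (n - 1) t) (u n t) (u (n + 1) t) (u (n + 2) t) ≠ 0)
    (hu : ∀ (n : ℤ) (t : ℝ), HasDerivAt (u n)
      (H (u (n - 1) t) (u n t) * H (u n t) (u (n + 1) t)
          * (u (n + 2) t - u (n - 2) t)
        / (P (u (n - 2) t) (u (n - 1) t) (u n t) (u (n + 1) t)
          * P (u (n - 1) t) (u n t) (u (n + 1) t) (u (n + 2) t))) t)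
    (w : ℤ → ℝ → ℝ)
    (hw : ∀ (n : ℤ) (t : ℝ), w n t = H (u n t) (u (n + 1) t)
      / P (u (n - 1) t) (u n t) (u (n + 1) t) (u (n + 2) t) - 1)
    (n : ℤ) (t : ℝ) (h1 : w (n + 1) t ≠ 0) (hm1 : w (n - 1) t ≠ 0) :
    HasDerivAt (w n)
      ((w n t + 1) * (w (n + 2) t * (1 / w (n + 1) t + 1) * w n t
        - w n t * (1 / w (n - 1) t + 1) * w (n - 2) t
        + w (n + 1) t - w (n - 1) t)) t := by
  set K := γ + γ⁻¹ with hK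
  have hE (x y : ℝ) : H x y = edgePoly γ K c x y := by
    rw [hH, edgePoly, hK]
    field_simp
    ring
  have hQ (a b e d : ℝ) : P a b e d = quadPoly γ K c a b e d := by
    rw [hP, quadPoly, edgePoly, secondDiff, secondDiff, hK]
    field_simp
    ring
  simp only [hE, hQ] at hPne hu hw
  clear hE hQ hH hP hc
  have hdm := hu (n - 1) t
  have hd0 := hu n t
  have hd1 := hu (n + 1) t
  have hd2 := hu (n + 2) t
  have hPm2 := hPne (n - 2) t
  have hPm := hPne (n - 1) t
  have hP0 := hPne n t
  have hP1 := hPne (n + 1) t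
  have hP2 := hPne (n + 2) t
  have hwm2 := hw (n - 2) t
  have hwm := hw (n - 1) t
  have hw0 := hw n t
  have hw1 := hw (n + 1) t
  have hw2 := hw (n + 2) t
  simp only [show n - 1 - 1 = n - 2 by ring, show n - 1 - 2 = n - 3 by ring,
    show n - 2 - 1 = n - 3 by ring, show n - 1 + 1 = n by ring, show n - 1 + 2 = n + 1 by ring,
    show n - 2 + 1 = n - 1 by ring, show n - 2 + 2 = n by ring, show n + 1 - 1 = n by ring,
    show n + 1 - 2 = n - 1 by ring, show n + 1 + 1 = n + 2 by ring,
    show n + 1 + 2 = n + 3 by ring, show n + 2 - 1 = n + 1 by ring,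
    show n + 2 - 2 = n by ring, show n + 2 + 1 = n + 3 by ring,
    show n + 2 + 2 = n + 4 by ring] at hdm hd0 hd1 hd2 hPm2 hPm hP0 hP1 hP2 hwm2 hwm hw0 hw1 hw2
  have hmain := hasDerivAt_edgePoly_div_quadPoly γ K c hdm hd0 hd1 hd2 hP0
  rw [show w n = _ from funext (hw n)]
  refine hmain.congr_deriv ?_
  have hR := right_contribution γ K c _ _ _ _ _ _ hP0 hP1 hP2
  have hL := right_contribution γ K c (u (n + 2) t) (u (n + 1) t) (u n t) (u (n - 1) t)
    (u (n - 2) t) (u (n - 3) t) (by rwa [quadPoly_reverse]) (by rwa [quadPoly_reverse])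
    (by rwa [quadPoly_reverse])
  rw [quadPoly_reverse γ K c (u (n + 2) t), quadPoly_reverse γ K c (u (n + 1) t) (u n t),
    quadPoly_reverse γ K c (u n t) (u (n - 1) t) (u (n - 2) t),
    edgePoly_comm γ K c (u (n + 1) t) (u n t), edgePoly_comm γ K c (u n t) (u (n - 1) t),
    edgePoly_comm γ K c (u (n - 1) t) (u (n - 2) t),
    edgePoly_comm γ K c (u (n + 2) t) (u (n + 1) t),
    secondDiff_comm K (u (n + 2) t), secondDiff_comm K (u (n + 1) t) (u n t),
    secondDiff_comm K (u (n - 1) t) (u (n - 2) t)] at hL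
  have hright := product_substitution γ K c _ _ _ _ _ _ hγ hP0 hP1 hP2 (hw1 ▸ h1)
  have hleft := product_substitution γ K c _ _ _ _ _ _ hγ hPm2 hPm hP0 (hwm ▸ hm1)
  beta_reduce
  rw [← hw0, ← hw1, ← hw2] at hright
  rw [← hw0, ← hwm, ← hwm2] at hleft
  rw [← hw0, hright, hleft, hw0, hw1, hwm]
  linear_combination hR - hL
end

section
/- Let q, p : ℤ → ℝ → ℝ be nonvanishing and satisfy the coupled system q' = q₋₁(qp+1)(qp₁+1), p' = −p₁(qp+1)(q₋₁p+1) (the flow ∂_y) and q• = q₁(qp+1)(qp₁+1), p• = −p₋₁(qp+1)(q₋₁p+1) (the flow ∂_z), where ' and • denote derivatives with respect to the two time variables y and z. Define u on ℤ by u(2k) = q(k), u(2k−1) = p(k). Then with respect to t := z − y, i.e. ∂_t = ∂_z − ∂_y, the function u satisfies at every site (even and odd) the single equation ∂_t u = (u₁u+1)(uu₋₁+1)(u₂−u₋₂). -/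
/-- The derivative along the antidiagonal is the difference of the partial derivatives. -/
theorem hasDerivAt_antidiagonal {f : ℝ → ℝ → ℝ} {y z a b : ℝ}
    (hf : DifferentiableAt ℝ (fun v : ℝ × ℝ => f v.1 v.2) (y, z))
    (hy : HasDerivAt (fun s => f s z) a y) (hz : HasDerivAt (fun s => f y s) b z) :
    HasDerivAt (fun s => f (y - s) (z + s)) (b - a) 0 := by
  obtain ⟨L, hL⟩ := hf
  have ha : L (1, 0) = a :=
    (HasFDerivAt.comp_hasDerivAt y (f := fun s => (s, z)) hL
      ((hasDerivAt_id y).prodMk (hasDerivAt_const y z))).unique hy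
  have hb : L (0, 1) = b :=
    (HasFDerivAt.comp_hasDerivAt z (f := fun s => (y, s)) hL
      ((hasDerivAt_const z y).prodMk (hasDerivAt_id z))).unique hz
  have hL' : HasFDerivAt (fun v : ℝ × ℝ => f v.1 v.2) L (y - 0, z + 0) := by
    simpa using hL
  have h := HasFDerivAt.comp_hasDerivAt (0 : ℝ) (f := fun s => (y - s, z + s)) hL'
    (((hasDerivAt_id (0 : ℝ)).const_sub y).prodMk ((hasDerivAt_id (0 : ℝ)).const_add z))
  have hdir : L (-1, 1) = b - a := by
    rw [← ha, ← hb, ← map_sub]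
    simp
  rwa [hdir] at h

/-- Derivation of lattice equation (g): interleaving the two-component flows
∂_y and ∂_z of case (G), the difference ∂_t = ∂_z − ∂_y is governed at every
site by the single equation u' = (u₁u+1)(uu₋₁+1)(u₂−u₋₂). -/
theorem stmt16 (q p : ℤ → ℝ → ℝ → ℝ)
    (hqdiff : ∀ k : ℤ, Differentiable ℝ (fun v : ℝ × ℝ => q k v.1 v.2))
    (hpdiff : ∀ k : ℤ, Differentiable ℝ (fun v : ℝ × ℝ => p k v.1 v.2))
    (hqy : ∀ (k : ℤ) (y z : ℝ), HasDerivAt (fun s => q k s z)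
      (q (k - 1) y z * (q k y z * p k y z + 1) * (q k y z * p (k + 1) y z + 1)) y)
    (hpy : ∀ (k : ℤ) (y z : ℝ), HasDerivAt (fun s => p k s z)
      (-p (k + 1) y z * (q k y z * p k y z + 1) * (q (k - 1) y z * p k y z + 1)) y)
    (hqz : ∀ (k : ℤ) (y z : ℝ), HasDerivAt (fun s => q k y s)
      (q (k + 1) y z * (q k y z * p k y z + 1) * (q k y z * p (k + 1) y z + 1)) z)
    (hpz : ∀ (k : ℤ) (y z : ℝ), HasDerivAt (fun s => p k y s)
      (-p (k - 1) y z * (q k y z * p k y z + 1) * (q (k - 1) y z * p k y z + 1)) z)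
    (u : ℤ → ℝ → ℝ → ℝ)
    (hu : ∀ k : ℤ, u (2 * k) = q k ∧ u (2 * k - 1) = p k) :
    ∀ (m : ℤ) (y z : ℝ), HasDerivAt (fun s => u m (y - s) (z + s))
      ((u (m + 1) y z * u m y z + 1) * (u m y z * u (m - 1) y z + 1)
        * (u (m + 2) y z - u (m - 2) y z)) 0 := by
  intro m y z
  have hq (k : ℤ) : u (2 * k) = q k := (hu k).1
  have hp (k : ℤ) : u (2 * k - 1) = p k := (hu k).2
  obtain ⟨k, rfl | rfl⟩ : ∃ k, m = 2 * k ∨ m = 2 * k - 1 := ⟨(m + 1) / 2, by lia⟩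
  · rw [show 2 * k + 1 = 2 * (k + 1) - 1 by ring, show 2 * k + 2 = 2 * (k + 1) by ring,
      show 2 * k - 2 = 2 * (k - 1) by ring, hq, hq, hq, hp, hp]
    convert hasDerivAt_antidiagonal (hqdiff k (y, z)) (hqy k y z) (hqz k y z) using 1
    ring
  · rw [show 2 * k - 1 + 1 = 2 * k by ring, show 2 * k - 1 - 1 = 2 * (k - 1) by ring,
      show 2 * k - 1 + 2 = 2 * (k + 1) - 1 by ring,
      show 2 * k - 1 - 2 = 2 * (k - 1) - 1 by ring, hq, hq, hp, hp, hp]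
    convert hasDerivAt_antidiagonal (hpdiff k (y, z)) (hpy k y z) (hpz k y z) using 1
    ring
end
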